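/- Suppose ε_ħ ħ^{−3/2} → ∞ and ε_ħ/ħ → 0 as ħ → 0⁺. Then for the periodized coherent state ψ_ħ with ξ₀ ≠ 0, for every primitive rank-1 sublattice Λ ⊆ ℤ² and every smooth compactly supported a : 𝕋² × ℝ → ℂ: (i) if ⟨ξ₀, v_Λ⟩ ≠ 0, then W_{Λ,ħ}(a) → 0 as ħ → 0⁺; (ii) if ⟨ξ₀, v_Λ⟩ = 0, then W_{Λ,ħ}(a) → I_Λ(a)(x₀, 0) as ħ → 0⁺, where I_Λ(a)(x, η) := L_Λ^{−1} ∫₀^{L_Λ} a(x + t v_Λ^⊥/L_Λ, η) dt. -/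

import Mathlib

open MeasureTheory Filter Real
open scoped Topology

noncomputable section

/-- The Euclidean inner product on `ℝ²`. -/
def dot2 (v w : ℝ × ℝ) : ℝ := v.1 * w.1 + v.2 * w.2

/-- The Euclidean norm on `ℝ²`. -/
def nrm2 (v : ℝ × ℝ) : ℝ := Real.sqrt (dot2 v v)

/-- The canonical embedding `ℤ² ↪ ℝ²`. -/
def toR2 (m : ℤ × ℤ) : ℝ × ℝ := ((m.1 : ℝ), (m.2 : ℝ))

/-- Rotation of an integer vector by `+π/2`. -/
def perpZ (v : ℤ × ℤ) : ℤ × ℤ := (-v.2, v.1)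

/-- `v` generates a primitive rank-1 sublattice `Λ = ℤ v` of `ℤ²`. -/
def Primitive (v : ℤ × ℤ) : Prop := Int.gcd v.1 v.2 = 1

/-- `L_Λ = ‖v_Λ‖`. -/
def LL (v : ℤ × ℤ) : ℝ := nrm2 (toR2 v)

/-- `H_Λ(ξ) = ⟨ξ, v_Λ⟩ / L_Λ`, where `v` is the generator `v_Λ` of `Λ`. -/
def HH (v : ℤ × ℤ) (ξ : ℝ × ℝ) : ℝ := dot2 ξ (toR2 v) / LL v

/-- Integral over a fundamental domain of the torus `𝕋² = ℝ²/ℤ²`. -/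
def torusInt (f : ℝ × ℝ → ℂ) : ℂ :=
  ∫ x in Set.Icc ((0, 0) : ℝ × ℝ) ((1, 1) : ℝ × ℝ), f x

/-- `e^{it}`. -/
def expI (t : ℝ) : ℂ := Complex.exp (Complex.I * (t : ℂ))

/-- The `j`-th Fourier coefficient (in `x`) of `a : 𝕋² × ℝ → ℂ`:
`â(j, η) = ∫_{𝕋²} a(x, η) e^{-2πi j·x} dx`. -/
def fcoef (a : ℝ × ℝ → ℝ → ℂ) (j : ℤ × ℤ) (η : ℝ) : ℂ :=
  torusInt fun x => a x η * expI (-(2 * π * dot2 (toR2 j) x))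

/-- The Fourier transform on `ℝ²`: `φ̂(ξ) = ∫_{ℝ²} φ(x) e^{-2πi x·ξ} dx`. -/
def FT (φ : ℝ × ℝ → ℂ) (ξ : ℝ × ℝ) : ℂ :=
  ∫ x : ℝ × ℝ, φ x * expI (-(2 * π * dot2 x ξ))

/-- The `m`-th Fourier coefficient of the periodized coherent state:
`ψ̂_hb(m) = hb^{1/2} e^{-2πi (m - ξ₀/hb)·x₀} φ̂(hb^{1/2}(m - ξ₀/hb))`. -/
def psiF (φ : ℝ × ℝ → ℂ) (x₀ ξ₀ : ℝ × ℝ) (hb : ℝ) (m : ℤ × ℤ) : ℂ :=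
  (Real.sqrt hb : ℂ) * expI (-(2 * π * dot2 (toR2 m - hb⁻¹ • ξ₀) x₀)) *
    FT φ (Real.sqrt hb • (toR2 m - hb⁻¹ • ξ₀))

/-- The two-microlocal quantity
`W_{Λ,hb}(a) = Σ_{m ∈ ℤ²} Σ_{j ∈ Λ} conj(ψ̂_hb(m)) ψ̂_hb(m−j) â(j, 2π hb² ε_hb⁻¹ H_Λ(m))`,
for the periodized coherent state, where `Λ = ℤ w` and `e = ε_hb`. -/
def Wcs (φ : ℝ × ℝ → ℂ) (x₀ ξ₀ : ℝ × ℝ) (w : ℤ × ℤ) (a : ℝ × ℝ → ℝ → ℂ)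
    (hb e : ℝ) : ℂ :=
  ∑' m : ℤ × ℤ, ∑' c : ℤ,
    (starRingEnd ℂ) (psiF φ x₀ ξ₀ hb m) * psiF φ x₀ ξ₀ hb (m - c • w) *
      fcoef a (c • w) (2 * π * hb ^ 2 / e * HH w (toR2 m))

/-- The average of `a` along the periodic flow in the direction `v_Λ^⊥/L_Λ`:
`I_Λ(a)(x, η) = L_Λ⁻¹ ∫₀^{L_Λ} a(x + t v_Λ^⊥/L_Λ, η) dt`. -/
def IΛ (w : ℤ × ℤ) (a : ℝ × ℝ → ℝ → ℂ) (x : ℝ × ℝ) (η : ℝ) : ℂ :=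
  ((LL w : ℝ) : ℂ)⁻¹ * ∫ t in (0:ℝ)..(LL w), a (x + (t / LL w) • toR2 (perpZ w)) η


theorem norm_expI (t : ℝ) : ‖expI t‖ = 1 := by
  unfold expI; rw [mul_comm]; exact Complex.norm_exp_ofReal_mul_I t

theorem expI_add (s t : ℝ) : expI (s + t) = expI s * expI t := by
  unfold expI; rw [← Complex.exp_add]; push_cast; ring_nf

theorem continuous_expI : Continuous expI := by unfold expI; fun_prop

theorem conj_expI (t : ℝ) : (starRingEnd ℂ) (expI t) = expI (-t) := by
  unfold expI; rw [← Complex.exp_conj]; simp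

theorem fourier_expI (T : ℝ) (n : ℤ) (x : ℝ) :
    (fourier n (x : AddCircle T) : ℂ) = expI (2 * π * (n * x / T)) := by
  rw [fourier_coe_apply]; unfold expI; push_cast; ring_nf

theorem parseval1 (f : ℝ → ℂ) (hf : Continuous f) (hs : ∀ x, f x ≠ 0 → |x| ≤ 1/2)
    (h : ℝ) (h0 : 0 < h) (h1 : h ≤ 1) :
    ∑' n : ℤ, ENNReal.ofReal (h * ‖∫ x, f x * expI (-(2 * π * (x * (h * n))))‖ ^ 2)
      = ∫⁻ x, ENNReal.ofReal (‖f x‖ ^ 2) := by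
  have hT : (1:ℝ) ≤ h⁻¹ := (one_le_inv₀ h0).2 h1
  have hab : -(h⁻¹/2) < h⁻¹/2 := by linarith
  have hcs : HasCompactSupport f := by
    apply HasCompactSupport.intro (K := Set.Icc (-(1/2)) (1/2)) isCompact_Icc
    intro x hx
    by_contra h'
    exact hx (abs_le.1 (hs x h'))
  have hL2 : MemLp f 2 (volume.restrict (Set.Ioc (-(h⁻¹/2)) (h⁻¹/2))) :=
    (hf.memLp_of_hasCompactSupport hcs).restrict _
  have key := hasSum_sq_fourierCoeffOn hab hL2
  have hIntg : ∀ g : ℝ → ℂ, ∫ x in (-(h⁻¹/2))..(h⁻¹/2), g x * f x = ∫ x, g x * f x := by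
    intro g
    rw [intervalIntegral.integral_of_le hab.le, ← integral_Icc_eq_integral_Ioc]
    apply setIntegral_eq_integral_of_forall_compl_eq_zero
    intro x hx
    by_contra h'
    apply hx
    have := abs_le.1 (hs x (right_ne_zero_of_mul h'))
    constructor <;> linarith
  have hIntg2 : ∫ x in (-(h⁻¹/2))..(h⁻¹/2), ‖f x‖^2 = ∫ x, ‖f x‖^2 := by
    rw [intervalIntegral.integral_of_le hab.le, ← integral_Icc_eq_integral_Ioc]
    apply setIntegral_eq_integral_of_forall_compl_eq_zero
    intro x hx
    by_contra h'
    apply hx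
    have h'' : f x ≠ 0 := by intro h2; apply h'; simp [h2]
    have := abs_le.1 (hs x h'')
    constructor <;> linarith
  have e1 : h⁻¹/2 - -(h⁻¹/2) = h⁻¹ := by ring
  have key2 : HasSum (fun n : ℤ => h * ‖∫ x, f x * expI (-(2 * π * (x * (h * n))))‖ ^ 2)
      (∫ x, ‖f x‖^2) := by
    have := key.mul_left h⁻¹
    rw [hIntg2, e1, inv_inv, smul_eq_mul, inv_mul_cancel_left₀ h0.ne'] at this
    refine (funext fun n => ?_ : (fun n : ℤ => h * ‖∫ x, f x * expI (-(2 * π * (x * (h * n))))‖ ^ 2)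
      = fun i => h⁻¹ * ‖fourierCoeffOn hab f i‖ ^ 2) ▸ this
    rw [fourierCoeffOn_eq_integral]
    simp only [smul_eq_mul]
    rw [hIntg, e1, norm_smul]
    have : ∀ x : ℝ, (fourier (-n) (x : AddCircle h⁻¹) : ℂ) * f x
        = f x * expI (-(2 * π * (x * (h * n)))) := by
      intro x
      rw [fourier_expI, mul_comm]
      congr 2
      push_cast
      field_simp
    simp_rw [this]
    simp only [one_div, inv_inv, Real.norm_eq_abs, abs_of_pos h0]
    have e2 : h⁻¹ * h ^ 2 = h := by field_simp
    rw [mul_pow, ← mul_assoc, e2]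
  rw [← ofReal_integral_eq_lintegral_ofReal, ← key2.tsum_eq, ENNReal.ofReal_tsum_of_nonneg]
  · intro n; positivity
  · exact key2.summable
  · have := (hf.memLp_of_hasCompactSupport (p := 2) (μ := volume) hcs).integrable_norm_pow
      (by norm_num)
    simpa using this
  · exact Filter.Eventually.of_forall fun x => by positivity

def boxS (f : ℝ × ℝ → ℂ) : Prop := ∀ x : ℝ × ℝ, f x ≠ 0 → |x.1| ≤ 1/2 ∧ |x.2| ≤ 1/2

theorem boxS.hcs {f : ℝ × ℝ → ℂ} (hs : boxS f) : HasCompactSupport f := by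
  apply HasCompactSupport.intro (K := Set.Icc (-(1/2)) (1/2) ×ˢ Set.Icc (-(1/2)) (1/2))
    (isCompact_Icc.prod isCompact_Icc)
  intro x hx
  by_contra h'
  exact hx ⟨abs_le.1 (hs x h').1, abs_le.1 (hs x h').2⟩

theorem FT_iter (f : ℝ × ℝ → ℂ) (hf : Continuous f) (hs : boxS f) (p q : ℝ) :
    FT f (p, q) = ∫ x, (∫ y, f (x, y) * expI (-(2 * π * (y * q)))) * expI (-(2 * π * (x * p))) := by
  unfold FT
  have hc : Continuous fun x : ℝ × ℝ => f x * expI (-(2 * π * dot2 x (p,q))) := by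
    unfold dot2
    exact hf.mul (continuous_expI.comp (by fun_prop))
  have hi : Integrable (fun x : ℝ × ℝ => f x * expI (-(2 * π * dot2 x (p,q))))
      ((volume : Measure ℝ).prod volume) :=
    hc.integrable_of_hasCompactSupport hs.hcs.mul_right
  rw [Measure.volume_eq_prod, integral_prod _ hi]
  congr 1; ext x
  rw [← integral_mul_const]
  congr 1; ext y
  rw [mul_assoc (f (x, y)), ← expI_add]
  unfold dot2
  ring_nf

theorem parseval2 (f : ℝ × ℝ → ℂ) (hf : Continuous f) (hs : boxS f)
    (h : ℝ) (h0 : 0 < h) (h1 : h ≤ 1) :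
    HasSum (fun m : ℤ × ℤ => h ^ 2 * ‖FT f (h • toR2 m)‖ ^ 2) (∫ x, ‖f x‖ ^ 2) := by
  have hcU : ∀ q : ℝ, Continuous fun x : ℝ => ∫ y, f (x, y) * expI (-(2 * π * (y * q))) := by
    intro q
    have : (fun x : ℝ => ∫ y, f (x, y) * expI (-(2 * π * (y * q))))
      = fun x : ℝ => ∫ y in Set.Icc (-(1/2):ℝ) (1/2), f (x, y) * expI (-(2 * π * (y * q))) := by
      ext x
      symm
      apply setIntegral_eq_integral_of_forall_compl_eq_zero
      intro y hy
      by_contra h'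
      exact hy (abs_le.1 (hs _ (left_ne_zero_of_mul h')).2)
    rw [this]
    apply continuous_parametric_integral_of_continuous _ isCompact_Icc
    unfold Function.uncurry
    exact (hf.comp (by fun_prop)).mul (continuous_expI.comp (by fun_prop))
  have hsU : ∀ q x : ℝ, (∫ y, f (x, y) * expI (-(2 * π * (y * q)))) ≠ 0 → |x| ≤ 1/2 := by
    intro q x hne
    by_contra h'
    apply hne
    have : ∀ y, f (x, y) = 0 := by
      intro y; by_contra h2; exact h' (hs _ h2).1
    simp [this]
  have main : ∑' m : ℤ × ℤ, ENNReal.ofReal (h ^ 2 * ‖FT f (h • toR2 m)‖ ^ 2)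
      = ∫⁻ x, ENNReal.ofReal (‖f x‖ ^ 2) := by
    rw [ENNReal.tsum_prod', ENNReal.tsum_comm]
    have step1 : ∀ n : ℤ, ∑' k : ℤ, ENNReal.ofReal (h ^ 2 * ‖FT f (h • toR2 (k, n))‖ ^ 2)
        = ∫⁻ x, ENNReal.ofReal (h * ‖∫ y, f (x, y) * expI (-(2 * π * (y * (h * n))))‖ ^ 2) := by
      intro n
      have := parseval1 (fun x => ∫ y, f (x, y) * expI (-(2 * π * (y * (h * n)))))
        (hcU _) (hsU _) h h0 h1
      simp_rw [ENNReal.ofReal_mul h0.le] at this ⊢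
      rw [lintegral_const_mul' _ _ ENNReal.ofReal_ne_top, ← this, ← ENNReal.tsum_mul_left]
      congr 1; ext k
      have e : h • toR2 (k, n) = (h * k, h * n) := by simp [toR2]
      rw [e, FT_iter f hf hs, pow_two h, mul_assoc, ENNReal.ofReal_mul h0.le,
        ENNReal.ofReal_mul h0.le]
    simp_rw [step1]
    rw [← lintegral_tsum]
    · rw [Measure.volume_eq_prod, lintegral_prod]
      · congr 1; ext x
        exact parseval1 (fun y => f (x, y)) (by fun_prop) (fun y hy => (hs _ hy).2) h h0 h1
      · exact (ENNReal.continuous_ofReal.comp (by fun_prop)).aemeasurable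
    · intro n
      have := hcU (h * n)
      exact (ENNReal.continuous_ofReal.comp (by fun_prop)).aemeasurable
  have hIntg : Integrable (fun x => ‖f x‖ ^ 2) := by
    have := (hf.memLp_of_hasCompactSupport (p := 2) (μ := volume) hs.hcs).integrable_norm_pow
      (by norm_num)
    simpa using this
  rw [← ofReal_integral_eq_lintegral_ofReal hIntg
    (Filter.Eventually.of_forall fun x => by positivity)] at main
  have hsum : Summable (fun m : ℤ × ℤ => h ^ 2 * ‖FT f (h • toR2 m)‖ ^ 2) := by
    have := ENNReal.summable_toReal (f := fun m : ℤ × ℤ =>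
      ENNReal.ofReal (h ^ 2 * ‖FT f (h • toR2 m)‖ ^ 2)) (by rw [main]; exact ENNReal.ofReal_ne_top)
    convert this using 2 with m
    rw [ENNReal.toReal_ofReal (by positivity)]
  rw [hsum.hasSum_iff]
  rw [← ENNReal.ofReal_tsum_of_nonneg (fun m => by positivity) hsum] at main
  rwa [ENNReal.ofReal_eq_ofReal_iff (tsum_nonneg fun m => by positivity)
    (integral_nonneg fun m => by positivity)] at main

theorem FT_shift (f : ℝ × ℝ → ℂ) (ξ s : ℝ × ℝ) :
    FT f (ξ - s) = FT (fun x => f x * expI (2 * π * dot2 x s)) ξ := by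
  unfold FT
  congr 1; ext x
  show _ = f x * expI (2 * π * dot2 x s) * expI (-(2 * π * dot2 x ξ))
  rw [mul_assoc (f x), ← expI_add]
  congr 2
  unfold dot2
  simp; ring

theorem continuous_mulexp (f : ℝ × ℝ → ℂ) (hf : Continuous f) (s : ℝ × ℝ) :
    Continuous (fun x => f x * expI (2 * π * dot2 x s)) := by
  unfold dot2
  exact hf.mul (continuous_expI.comp (by fun_prop))

theorem parseval (f : ℝ × ℝ → ℂ) (hf : Continuous f) (hs : boxS f)
    (h : ℝ) (h0 : 0 < h) (h1 : h ≤ 1) (s : ℝ × ℝ) :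
    HasSum (fun m : ℤ × ℤ => h ^ 2 * ‖FT f (h • (toR2 m - s))‖ ^ 2) (∫ x, ‖f x‖ ^ 2) := by
  simp_rw [smul_sub, FT_shift]
  have := parseval2 (fun x => f x * expI (2 * π * dot2 x (h • s))) (continuous_mulexp f hf _)
    (fun x hx => hs x (left_ne_zero_of_mul hx)) h h0 h1
  simpa [norm_expI] using this

theorem norm_expI_sub_one (t : ℝ) : ‖expI t - 1‖ ≤ |t| := by
  unfold expI
  simpa using Real.norm_exp_I_mul_ofReal_sub_one_le (x := t)

theorem fderiv_boxS (φ : ℝ × ℝ → ℂ) (hs : boxS φ) (v : ℝ × ℝ) :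
    boxS (fun x => fderiv ℝ φ x v) := by
  intro x hx
  have hx1 : x ∈ tsupport φ := by
    by_contra h
    have h2 : x ∉ Function.support (fderiv ℝ φ) := fun h3 => h (support_fderiv_subset ℝ h3)
    apply hx
    simp only [Function.mem_support, not_not] at h2
    simp [h2]
  have hsub : tsupport φ ⊆ {x : ℝ × ℝ | |x.1| ≤ 1/2 ∧ |x.2| ≤ 1/2} := by
    apply closure_minimal
    · intro y hy; exact hs y hy
    · exact IsClosed.inter
        (isClosed_le (f := fun x : ℝ × ℝ => |x.1|) (g := fun _ => 1/2) (by fun_prop) (by fun_prop))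
        (isClosed_le (f := fun x : ℝ × ℝ => |x.2|) (g := fun _ => 1/2) (by fun_prop) (by fun_prop))
  exact hsub hx1

theorem FT_fderiv (φ : ℝ × ℝ → ℂ) (hφ : ContDiff ℝ (⊤ : ℕ∞) φ) (hs : boxS φ) (v ξ : ℝ × ℝ) :
    FT (fun x => fderiv ℝ φ x v) ξ = (2 * π * dot2 v ξ : ℝ) * Complex.I * FT φ ξ := by
  have hder : ∀ x : ℝ × ℝ, HasFDerivAt (fun x : ℝ × ℝ => expI (-(2 * π * dot2 x ξ)))
      ((expI (-(2 * π * dot2 x ξ)) * Complex.I) • (Complex.ofRealCLM.comp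
        ((-(2 * π * ξ.1)) • ContinuousLinearMap.fst ℝ ℝ ℝ
          + (-(2 * π * ξ.2)) • ContinuousLinearMap.snd ℝ ℝ ℝ))) x := by
    intro x
    set l := ((-(2 * π * ξ.1)) • ContinuousLinearMap.fst ℝ ℝ ℝ
          + (-(2 * π * ξ.2)) • ContinuousLinearMap.snd ℝ ℝ ℝ) with hl
    have e : (fun x : ℝ × ℝ => expI (-(2 * π * dot2 x ξ)))
        = fun x => Complex.exp (Complex.I * (Complex.ofRealCLM.comp l) x) := by
      ext x
      unfold expI dot2
      simp [hl]
      ring_nf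
    rw [e]
    have e2 : expI (-(2 * π * dot2 x ξ)) = Complex.exp (Complex.I * (Complex.ofRealCLM.comp l) x) :=
      congrFun e x
    rw [e2]
    have := ((Complex.ofRealCLM.comp l).hasFDerivAt (x := x)).const_mul Complex.I |>.cexp
    rw [mul_smul]
    exact this
  have hde : ∀ x, fderiv ℝ (fun x : ℝ × ℝ => expI (-(2 * π * dot2 x ξ))) x v
      = -((2 * π * dot2 v ξ : ℝ) * Complex.I) * expI (-(2 * π * dot2 x ξ)) := by
    intro x
    rw [(hder x).fderiv]
    unfold dot2
    simp
    ring
  have hce : Continuous (fun x : ℝ × ℝ => expI (-(2 * π * dot2 x ξ))) :=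
    continuous_expI.comp (by unfold dot2; fun_prop)
  have hcd : Continuous (fun x => fderiv ℝ φ x v) := by
    have := hφ.continuous_fderiv (by simp)
    fun_prop
  have key := integral_mul_fderiv_eq_neg_fderiv_mul_of_integrable (μ := volume) (f := φ)
    (g := fun x : ℝ × ℝ => expI (-(2 * π * dot2 x ξ))) (v := v) ?_ ?_ ?_ ?_ ?_
  · unfold FT
    rw [← neg_eq_iff_eq_neg.2 key]
    rw [← integral_neg, ← integral_const_mul]
    congr 1; ext x
    rw [hde]; ring
  · exact (hcd.mul hce).integrable_of_hasCompactSupport (fderiv_boxS φ hs v).hcs.mul_right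
  · simp_rw [hde]
    exact (hφ.continuous.mul (continuous_const.mul hce)).integrable_of_hasCompactSupport hs.hcs.mul_right
  · exact (hφ.continuous.mul hce).integrable_of_hasCompactSupport hs.hcs.mul_right
  · intro x _
    exact (hφ.differentiable (by simp)) x
  · intro x _
    exact (hder x).differentiableAt

/-- weighted Parseval -/
theorem parsevalD (φ : ℝ × ℝ → ℂ) (hφ : ContDiff ℝ (⊤ : ℕ∞) φ) (hs : boxS φ) (v : ℝ × ℝ) :
    ∃ C : ℝ, 0 ≤ C ∧ ∀ (h : ℝ), 0 < h → h ≤ 1 → ∀ s : ℝ × ℝ,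
    HasSum (fun m : ℤ × ℤ => h ^ 2 * (|dot2 (h • (toR2 m - s)) v| *
      ‖FT φ (h • (toR2 m - s))‖) ^ 2) C := by
  refine ⟨(2 * π)⁻¹ ^ 2 * ∫ x, ‖fderiv ℝ φ x v‖ ^ 2,
    mul_nonneg (by positivity) (integral_nonneg fun x => by positivity), ?_⟩
  intro h h0 h1 s
  have hcd : Continuous (fun x => fderiv ℝ φ x v) := by
    have := hφ.continuous_fderiv (by simp)
    fun_prop
  have := (parseval _ hcd (fderiv_boxS φ hs v) h h0 h1 s).mul_left ((2 * π)⁻¹ ^ 2)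
  refine (funext fun m => ?_ : (fun m : ℤ × ℤ => h ^ 2 * (|dot2 (h • (toR2 m - s)) v| *
      ‖FT φ (h • (toR2 m - s))‖) ^ 2) = fun m : ℤ × ℤ => (2 * π)⁻¹ ^ 2 *
      (h ^ 2 * ‖FT (fun x => fderiv ℝ φ x v) (h • (toR2 m - s))‖ ^ 2)) ▸ this
  rw [FT_fderiv φ hφ hs]
  have hpi : (0:ℝ) < 2 * π := by positivity
  have e : dot2 v (h • (toR2 m - s)) = dot2 (h • (toR2 m - s)) v := by unfold dot2; ring
  rw [norm_mul, norm_mul, Complex.norm_real, Complex.norm_I, Real.norm_eq_abs, abs_mul,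
    abs_of_pos hpi, e]
  generalize ‖FT φ (h • (toR2 m - s))‖ = N
  generalize |dot2 (h • (toR2 m - s)) v| = M
  field_simp

/-- difference Parseval -/
theorem parsevalS (φ : ℝ × ℝ → ℂ) (hφ : Continuous φ) (hs : boxS φ)
    (v : ℝ × ℝ) :
    ∃ C : ℝ, 0 ≤ C ∧ ∀ (h : ℝ), 0 < h → h ≤ 1 → ∀ s : ℝ × ℝ, ∃ S : ℝ, S ≤ C * h ^ 2 ∧
    HasSum (fun m : ℤ × ℤ => h ^ 2 *
      ‖FT φ (h • (toR2 m - v - s)) - FT φ (h • (toR2 m - s))‖ ^ 2) S := by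
  have hIntg : ∀ f : ℝ × ℝ → ℂ, Continuous f → boxS f → Integrable (fun x => ‖f x‖ ^ 2) := by
    intro f hf hs
    have := (hf.memLp_of_hasCompactSupport (p := 2) (μ := volume) hs.hcs).integrable_norm_pow
      (by norm_num)
    simpa using this
  refine ⟨(2 * π * (|v.1| + |v.2|)) ^ 2 * ∫ x, ‖φ x‖ ^ 2,
    mul_nonneg (by positivity) (integral_nonneg fun x => by positivity), ?_⟩
  intro h h0 h1 s
  set g : ℝ × ℝ → ℂ := fun x => φ x * expI (2 * π * dot2 x (h • v)) - φ x with hg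
  have hgc : Continuous g := (continuous_mulexp φ hφ _).sub hφ
  have hgs : boxS g := by
    intro x hx
    apply hs x
    intro h'; apply hx; simp [hg, h']
  refine ⟨∫ x, ‖g x‖ ^ 2, ?_, ?_⟩
  rotate_left
  · have := parseval g hgc hgs h h0 h1 s
    refine (funext fun m => ?_ : (fun m : ℤ × ℤ => h ^ 2 *
      ‖FT φ (h • (toR2 m - v - s)) - FT φ (h • (toR2 m - s))‖ ^ 2) =
        fun m : ℤ × ℤ => (h ^ 2 * ‖FT g (h • (toR2 m - s))‖ ^ 2)) ▸ this
    congr 3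
    have e : h • (toR2 m - v - s) = h • (toR2 m - s) - h • v := by
      rw [← smul_sub]; congr 1; abel
    rw [e, FT_shift]
    unfold FT
    rw [← integral_sub]
    · congr 1; ext x
      simp only [hg]; ring
    · refine ((continuous_mulexp φ hφ _).mul (continuous_expI.comp ?_)).integrable_of_hasCompactSupport
        (hs.hcs.mul_right.mul_right)
      unfold dot2; fun_prop
    · refine (hφ.mul (continuous_expI.comp ?_)).integrable_of_hasCompactSupport
        (hs.hcs.mul_right)
      unfold dot2; fun_prop
  · rw [mul_right_comm, ← integral_const_mul]
    apply integral_mono (hIntg g hgc hgs) ((hIntg φ hφ hs).const_mul _)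
    intro x
    simp only
    by_cases hx : φ x = 0
    · simp [hg, hx]
    · obtain ⟨b1, b2⟩ := hs x hx
      have e : g x = φ x * (expI (2 * π * dot2 x (h • v)) - 1) := by simp only [hg]; ring
      rw [e, norm_mul, mul_pow, mul_comm]
      apply mul_le_mul_of_nonneg_right _ (by positivity)
      rw [← mul_pow]
      apply pow_le_pow_left₀ (norm_nonneg _)
      refine (norm_expI_sub_one _).trans ?_
      rw [abs_mul, abs_of_pos (by positivity : 0 < 2 * π), mul_assoc (2 * π)]
      apply mul_le_mul_of_nonneg_left _ (by positivity)
      unfold dot2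
      simp only [Prod.smul_fst, Prod.smul_snd, smul_eq_mul]
      refine (abs_add_le _ _).trans ?_
      rw [abs_mul, abs_mul, abs_mul, abs_mul, abs_of_pos h0]
      have h3 : |x.1| * (h * |v.1|) ≤ 1 * (h * |v.1|) :=
        mul_le_mul_of_nonneg_right (by linarith) (by positivity)
      have h4 : |x.2| * (h * |v.2|) ≤ 1 * (h * |v.2|) :=
        mul_le_mul_of_nonneg_right (by linarith) (by positivity)
      linarith

theorem toR2_sub (m n : ℤ × ℤ) : toR2 (m - n) = toR2 m - toR2 n := by
  unfold toR2; simp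

/-- the general term -/
def trm (φ : ℝ × ℝ → ℂ) (s v : ℝ × ℝ) (h : ℝ) (m : ℤ × ℤ) : ℂ :=
  ((h : ℂ) ^ 2) * ((starRingEnd ℂ) (FT φ (h • (toR2 m - s))) * FT φ (h • (toR2 m - v - s)))

theorem trm_bound (φ : ℝ × ℝ → ℂ) (hφ : Continuous φ) (hs : boxS φ)
    (hn : ∫ x : ℝ × ℝ, ‖φ x‖ ^ 2 = 1) (h : ℝ) (h0 : 0 < h) (h1 : h ≤ 1) (s v : ℝ × ℝ) :
    ∃ g : ℤ × ℤ → ℝ, HasSum g 1 ∧ ∀ m, ‖trm φ s v h m‖ ≤ g m := by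
  have p1 := parseval φ hφ hs h h0 h1 s
  have p2 := parseval φ hφ hs h h0 h1 (v + s)
  rw [hn] at p1 p2
  refine ⟨fun m => (1/2) * (h ^ 2 * ‖FT φ (h • (toR2 m - s))‖ ^ 2 +
    h ^ 2 * ‖FT φ (h • (toR2 m - (v + s)))‖ ^ 2), ?_, ?_⟩
  · have := (p1.add p2).mul_left (1/2)
    rwa [show (1/2:ℝ) * (1 + 1) = 1 by norm_num] at this
  · intro m
    unfold trm
    rw [norm_mul, norm_mul, norm_pow, Complex.norm_real, RCLike.norm_conj, Real.norm_eq_abs,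
      abs_of_pos h0, sub_sub]
    nlinarith [mul_nonneg (sq_nonneg h) (sq_nonneg (‖FT φ (h • (toR2 m - s))‖ -
      ‖FT φ (h • (toR2 m - (v + s)))‖))]

theorem trm_lim (φ : ℝ × ℝ → ℂ) (hφ : ContDiff ℝ (⊤ : ℕ∞) φ) (hs : boxS φ)
    (hn : ∫ x : ℝ × ℝ, ‖φ x‖ ^ 2 = 1) (w v : ℝ × ℝ) :
    ∃ C : ℝ, 0 ≤ C ∧ ∀ (h : ℝ), 0 < h → h ≤ 1 → ∀ (s : ℝ × ℝ) (b : ℤ × ℤ → ℂ) (l : ℂ) (K B : ℝ),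
      (∀ m, ‖b m‖ ≤ B) → (∀ m, ‖b m - l‖ ≤ K * |dot2 (h • (toR2 m - s)) w|) → 0 ≤ K →
      ‖∑' m, trm φ s v h m * b m - l‖ ≤ C * (K + ‖l‖ * h) := by
  obtain ⟨C1, hC1, H1⟩ := parsevalD φ hφ hs w
  obtain ⟨C2, hC2, H2⟩ := parsevalS φ hφ.continuous hs v
  refine ⟨(C1 + 1) + (1 + C2), by positivity, ?_⟩
  intro h h0 h1 s b l K B hB hb hK
  obtain ⟨g, hg, hgb⟩ := trm_bound φ hφ.continuous hs hn h h0 h1 s v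
  have p1 := parseval φ hφ.continuous hs h h0 h1 s
  have p2 := parseval φ hφ.continuous hs h h0 h1 (v + s)
  rw [hn] at p1 p2
  have p3 := H1 h h0 h1 s
  obtain ⟨S, hS, p4⟩ := H2 h h0 h1 s
  have hsum1 : Summable fun m => trm φ s v h m * b m := by
    apply Summable.of_norm_bounded (hg.summable.mul_right B)
    intro m
    rw [norm_mul]
    exact mul_le_mul (hgb m) (hB m) (norm_nonneg _) ((norm_nonneg _).trans (hgb m))
  have p1c : HasSum (fun m : ℤ × ℤ => ((h ^ 2 * ‖FT φ (h • (toR2 m - s))‖ ^ 2 : ℝ) : ℂ) * l) l := by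
    have := (Complex.hasSum_ofReal.2 p1).mul_right l
    simpa using this
  have e1 : ∑' m, trm φ s v h m * b m - l = ∑' m, (trm φ s v h m * b m -
      ((h ^ 2 * ‖FT φ (h • (toR2 m - s))‖ ^ 2 : ℝ) : ℂ) * l) := by
    rw [hsum1.tsum_sub p1c.summable, p1c.tsum_eq]
  rw [e1]
  have hb1 := ((p3.add p2).mul_left (K / 2)).add
    (((p1.mul_left h).add (p4.mul_left h⁻¹)).mul_left (‖l‖ / 2))
  refine (tsum_of_norm_bounded hb1 ?_).trans ?_
  · intro m
    unfold trm
    rw [sub_sub (toR2 m) v s]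
    set A := FT φ (h • (toR2 m - s)) with hA
    set A' := FT φ (h • (toR2 m - (v + s))) with hA'
    set d := |dot2 (h • (toR2 m - s)) w| with hd
    have hd0 : 0 ≤ d := abs_nonneg _
    have e2 : (h : ℂ) ^ 2 * ((starRingEnd ℂ) A * A') * b m - ((h ^ 2 * ‖A‖ ^ 2 : ℝ) : ℂ) * l
        = (h : ℂ) ^ 2 * ((starRingEnd ℂ) A * A') * (b m - l) +
          (h : ℂ) ^ 2 * ((starRingEnd ℂ) A) * (A' - A) * l := by
      push_cast
      rw [← Complex.conj_mul']
      ring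
    rw [e2]
    refine (norm_add_le _ _).trans (add_le_add ?_ ?_)
    · simp only [norm_mul, norm_pow, Complex.norm_real, RCLike.norm_conj, Real.norm_eq_abs,
        abs_of_pos h0]
      calc h ^ 2 * (‖A‖ * ‖A'‖) * ‖b m - l‖ ≤ h ^ 2 * (‖A‖ * ‖A'‖) * (K * d) :=
            mul_le_mul_of_nonneg_left (hb m) (by positivity)
        _ = K / 2 * (h ^ 2 * (2 * ((d * ‖A‖) * ‖A'‖))) := by ring
        _ ≤ K / 2 * (h ^ 2 * ((d * ‖A‖) ^ 2 + ‖A'‖ ^ 2)) := by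
            gcongr
            nlinarith [sq_nonneg (d * ‖A‖ - ‖A'‖)]
        _ = _ := by ring
    · simp only [norm_mul, norm_pow, Complex.norm_real, RCLike.norm_conj, Real.norm_eq_abs,
        abs_of_pos h0]
      calc h ^ 2 * ‖A‖ * ‖A' - A‖ * ‖l‖ = ‖l‖ / 2 * (h * (2 * (h * ‖A‖) * ‖A' - A‖)) := by ring
        _ ≤ ‖l‖ / 2 * (h * ((h * ‖A‖) ^ 2 + ‖A' - A‖ ^ 2)) := by
            gcongr
            nlinarith [sq_nonneg (h * ‖A‖ - ‖A' - A‖)]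
        _ = _ := by field_simp
  · have : h⁻¹ * S ≤ C2 * h := by
      rw [inv_mul_le_iff₀ h0]; linarith
    have h5 : ‖l‖ / 2 * (h * 1 + h⁻¹ * S) ≤ ‖l‖ / 2 * (h * 1 + C2 * h) := by gcongr
    have h6 : 0 ≤ ‖l‖ * h := by positivity
    nlinarith [mul_nonneg hK hC1, mul_nonneg hK hC2, mul_nonneg h6 hC1, mul_nonneg h6 hC2]

theorem tsum_swap (F : ℤ × ℤ → ℤ → ℂ) (g : ℤ → ℤ × ℤ → ℝ) (B : ℤ → ℝ)
    (hg1 : ∀ c, HasSum (g c) 1) (hg0 : ∀ c m, 0 ≤ g c m) (hBs : Summable B) (hBn : ∀ c, 0 ≤ B c)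
    (hF : ∀ m c, ‖F m c‖ ≤ B c * g c m) : ∑' c, ∑' m, F m c = ∑' m, ∑' c, F m c := by
  have hS : Summable fun p : ℤ × (ℤ × ℤ) => B p.1 * g p.1 p.2 := by
    have h0 : (0 : ℤ × (ℤ × ℤ) → ℝ) ≤ fun p : ℤ × (ℤ × ℤ) => B p.1 * g p.1 p.2 := by
      intro p
      exact mul_nonneg (hBn p.1) (hg0 p.1 p.2)
    refine (summable_prod_of_nonneg h0).2 ⟨fun c => (hg1 c).summable.mul_left (B c), ?_⟩
    have e : (fun c => ∑' m, B c * g c m) = B := by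
      ext c
      rw [tsum_mul_left, (hg1 c).tsum_eq, mul_one]
    show Summable (fun c => ∑' m, B c * g c m)
    rw [e]
    exact hBs
  refine Summable.tsum_comm (f := F) ?_
  refine Summable.of_norm_bounded ((Equiv.prodComm _ _).summable_iff.2 hS) ?_
  rintro ⟨m, c⟩
  exact hF m c

theorem W_limit (φ : ℝ × ℝ → ℂ) (hφ : ContDiff ℝ (⊤ : ℕ∞) φ) (hs : boxS φ)
    (hn : ∫ x : ℝ × ℝ, ‖φ x‖ ^ 2 = 1) (x₀ ξ₀ : ℝ × ℝ) (w : ℤ × ℤ)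
    (a : ℝ × ℝ → ℝ → ℂ) (ε : ℝ → ℝ) (B : ℤ → ℝ) (hBs : Summable B)
    (hB : ∀ c η, ‖fcoef a (c • w) η‖ ≤ B c) (l : ℤ → ℂ) (K : ℤ → ℝ) (hK : ∀ c, 0 ≤ K c)
    (r : ℝ → ℝ) (hr0 : ∀ᶠ hb in 𝓝[>] (0:ℝ), 0 ≤ r hb) (hr : Tendsto r (𝓝[>] (0:ℝ)) (𝓝 0))
    (hl : ∀ᶠ hb in 𝓝[>] (0:ℝ), ∀ c m,
      ‖fcoef a (c • w) (2 * π * hb ^ 2 / ε hb * HH w (toR2 m)) - l c‖ ≤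
        K c * r hb * |dot2 (Real.sqrt hb • (toR2 m - hb⁻¹ • ξ₀)) (toR2 w)|) :
    Tendsto (fun hb => Wcs φ x₀ ξ₀ w a hb (ε hb)) (𝓝[>] (0:ℝ))
      (𝓝 (∑' c : ℤ, expI (2 * π * dot2 (toR2 (c • w)) x₀) * l c)) := by
  set θ : ℤ → ℂ := fun c => expI (2 * π * dot2 (toR2 (c • w)) x₀) with hθ
  set η : ℝ → ℤ × ℤ → ℝ := fun hb m => 2 * π * hb ^ 2 / ε hb * HH w (toR2 m) with hη
  have hev : ∀ᶠ hb in 𝓝[>] (0:ℝ), 0 < hb ∧ hb ≤ 1 :=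
    Ioc_mem_nhdsGT (by norm_num : (0:ℝ) < 1)
  have hsq : ∀ hb : ℝ, 0 < hb ∧ hb ≤ 1 → 0 < Real.sqrt hb ∧ Real.sqrt hb ≤ 1 := fun hb h =>
    ⟨Real.sqrt_pos.2 h.1, by simpa using Real.sqrt_le_sqrt h.2⟩
  have hterm : ∀ hb m c, (starRingEnd ℂ) (psiF φ x₀ ξ₀ hb m) * psiF φ x₀ ξ₀ hb (m - c • w) *
      fcoef a (c • w) (η hb m) = θ c * (trm φ (hb⁻¹ • ξ₀) (toR2 (c • w)) (Real.sqrt hb) m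
        * fcoef a (c • w) (η hb m)) := by
    intro hb m c
    unfold psiF trm
    simp only [map_mul, conj_expI, Complex.conj_ofReal, toR2_sub]
    have : θ c = expI (- -(2 * π * dot2 (toR2 m - hb⁻¹ • ξ₀) x₀)) *
        expI (-(2 * π * dot2 (toR2 m - toR2 (c • w) - hb⁻¹ • ξ₀) x₀)) := by
      rw [← expI_add, hθ]
      simp only
      congr 1
      unfold dot2
      simp
      ring
    rw [this]
    ring
  have hθn : ∀ c, ‖θ c‖ = 1 := fun c => norm_expI _
  have hBn : ∀ c, 0 ≤ B c := fun c => (norm_nonneg _).trans (hB c 0)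
  have hW : ∀ᶠ hb in 𝓝[>] (0:ℝ), ∑' c, θ c * ∑' m, trm φ (hb⁻¹ • ξ₀) (toR2 (c • w)) (Real.sqrt hb) m
        * fcoef a (c • w) (η hb m) = Wcs φ x₀ ξ₀ w a hb (ε hb) := by
    filter_upwards [hev] with hb hhb
    unfold Wcs
    simp_rw [← tsum_mul_left]
    have : ∀ m c, (starRingEnd ℂ) (psiF φ x₀ ξ₀ hb m) * psiF φ x₀ ξ₀ hb (m - c • w) *
      fcoef a (c • w) (2 * π * hb ^ 2 / ε hb * HH w (toR2 m)) = _ := fun m c => hterm hb m c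
    simp_rw [this]
    have hg := fun c : ℤ => trm_bound φ hφ.continuous hs hn (Real.sqrt hb) (hsq hb hhb).1
      (hsq hb hhb).2 (hb⁻¹ • ξ₀) (toR2 (c • w))
    choose g hg1 hg2 using hg
    have hg0 : ∀ c m, 0 ≤ g c m := fun c m => (norm_nonneg _).trans (hg2 c m)
    refine tsum_swap (fun m c => θ c * (trm φ (hb⁻¹ • ξ₀) (toR2 (c • w)) (Real.sqrt hb) m
        * fcoef a (c • w) (η hb m))) g B hg1 hg0 hBs hBn ?_
    intro m c
    rw [norm_mul, norm_mul, hθn, one_mul, mul_comm]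
    exact mul_le_mul (hB _ _) (hg2 c m) (norm_nonneg _) (hBn c)
  refine Tendsto.congr' hW ?_
  apply tendsto_tsum_of_dominated_convergence hBs
  · intro c
    obtain ⟨C, hC, H⟩ := trm_lim φ hφ hs hn (toR2 w) (toR2 (c • w))
    apply Tendsto.const_mul
    rw [tendsto_iff_norm_sub_tendsto_zero]
    have hlim : Tendsto (fun hb => C * (K c * r hb + ‖l c‖ * Real.sqrt hb)) (𝓝[>] (0:ℝ)) (𝓝 0) := by
      have h1 : Tendsto (fun hb => Real.sqrt hb) (𝓝[>] (0:ℝ)) (𝓝 0) := by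
        have := (Real.continuous_sqrt.tendsto 0).mono_left (nhdsWithin_le_nhds (s := Set.Ioi 0))
        simpa using this
      have := ((hr.const_mul (K c)).add (h1.const_mul ‖l c‖)).const_mul C
      simpa using this
    refine squeeze_zero' (Eventually.of_forall fun hb => norm_nonneg _) ?_ hlim
    filter_upwards [hev, hr0, hl] with hb h1 h2 h3
    exact H _ (hsq hb h1).1 (hsq hb h1).2 _ _ _ _ (B c) (fun m => hB c _) (fun m => h3 c m)
      (mul_nonneg (hK c) h2)
  · filter_upwards [hev] with hb hhb
    intro c
    rw [norm_mul, hθn, one_mul]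
    obtain ⟨g, hg1, hg2⟩ := trm_bound φ hφ.continuous hs hn (Real.sqrt hb) (hsq hb hhb).1
      (hsq hb hhb).2 (hb⁻¹ • ξ₀) (toR2 (c • w))
    have := hg1.mul_right (B c)
    rw [one_mul] at this
    apply tsum_of_norm_bounded this
    intro m
    rw [norm_mul]
    exact mul_le_mul (hg2 m) (hB _ _) (norm_nonneg _) ((norm_nonneg _).trans (hg2 m))

/-- the integer change of coordinates -/
def Mmap (p q u v : ℝ) (h : u * p + v * q = 1) : (ℝ × ℝ) ≃ₗ[ℝ] (ℝ × ℝ) where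
  toFun z := (u * z.1 - q * z.2, v * z.1 + p * z.2)
  invFun x := (p * x.1 + q * x.2, -v * x.1 + u * x.2)
  map_add' x y := by ext <;> simp <;> ring
  map_smul' c x := by ext <;> simp <;> ring
  left_inv z := by
    ext
    · simp; linear_combination z.1 * h
    · simp; linear_combination z.2 * h
  right_inv z := by
    ext
    · simp; linear_combination z.1 * h
    · simp; linear_combination z.2 * h

theorem Mmap_det (p q u v : ℝ) (h : u * p + v * q = 1) :
    LinearMap.det (Mmap p q u v h : (ℝ × ℝ) →ₗ[ℝ] (ℝ × ℝ)) = 1 := by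
  rw [← LinearMap.det_toMatrix (Module.Basis.finTwoProd ℝ), Matrix.det_fin_two]
  simp [LinearMap.toMatrix_apply, Mmap]
  linarith

theorem torus_ico (f : ℝ × ℝ → ℂ) : torusInt f =
    ∫ x in ZSpan.fundamentalDomain (Module.Basis.finTwoProd ℝ), f x := by
  unfold torusInt
  apply setIntegral_congr_set
  rw [← Set.Icc_prod_Icc]
  have : ZSpan.fundamentalDomain (Module.Basis.finTwoProd ℝ) = Set.Ico (0:ℝ) 1 ×ˢ Set.Ico (0:ℝ) 1 := by
    ext x
    simp [ZSpan.mem_fundamentalDomain, Fin.forall_fin_two]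
  rw [this, Measure.volume_eq_prod]
  exact (Measure.set_prod_ae_eq Ico_ae_eq_Icc Ico_ae_eq_Icc).symm

theorem torus_cov (f : ℝ × ℝ → ℂ) (hf : ∀ x j, f (x + toR2 j) = f x) (p q u v : ℤ)
    (h : (u:ℝ) * p + v * q = 1) :
    torusInt f = torusInt (fun z => f (Mmap p q u v h z)) := by
  rw [torus_ico, torus_ico]
  set M := Mmap p q u v h with hM
  set b0 := Module.Basis.finTwoProd ℝ with hb0
  have hspan0 : ∀ x, x ∈ Submodule.span ℤ (Set.range b0) ↔ ∃ j, x = toR2 j := by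
    intro x
    have : Set.range b0 = {((1:ℝ),(0:ℝ)), ((0:ℝ),(1:ℝ))} := by
      ext y
      simp [Fin.exists_fin_two, hb0, eq_comm]
    rw [this, Submodule.mem_span_pair]
    constructor
    · rintro ⟨a, b, rfl⟩
      exact ⟨(a, b), by simp [toR2]⟩
    · rintro ⟨j, rfl⟩
      exact ⟨j.1, j.2, by simp [toR2]⟩
  have hspan1 : ∀ x, x ∈ Submodule.span ℤ (Set.range (b0.map M)) ↔ ∃ j, x = toR2 j := by
    intro x
    have : Set.range (b0.map M) = {((u:ℝ),(v:ℝ)), (-(q:ℝ),(p:ℝ))} := by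
      ext y
      simp [Fin.exists_fin_two, hb0, eq_comm, hM, Mmap]
    rw [this, Submodule.mem_span_pair]
    constructor
    · rintro ⟨a, b, rfl⟩
      exact ⟨(a * u - b * q, a * v + b * p), by simp [toR2]; ring⟩
    · rintro ⟨j, rfl⟩
      refine ⟨p * j.1 + q * j.2, -v * j.1 + u * j.2, ?_⟩
      ext
      · simp [toR2]; linear_combination (j.1 : ℝ) * h
      · simp [toR2]; linear_combination (j.2 : ℝ) * h
  have hspan : Submodule.span ℤ (Set.range (b0.map M)) = Submodule.span ℤ (Set.range b0) := by
    ext x; rw [hspan0, hspan1]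
  have d0 := ZSpan.isAddFundamentalDomain b0 volume
  have d1 := ZSpan.isAddFundamentalDomain (b0.map M) volume
  rw [hspan] at d1
  have e1 : ∫ x in ZSpan.fundamentalDomain b0, f x
      = ∫ x in ZSpan.fundamentalDomain (b0.map M), f x := by
    have : Countable (Submodule.span ℤ (Set.range b0)) := inferInstance
    have : VAddInvariantMeasure (Submodule.span ℤ (Set.range b0)) (ℝ × ℝ) volume :=
      inferInstanceAs <| VAddInvariantMeasure (Submodule.span ℤ (Set.range b0)).toAddSubgroup _ volume
    refine d0.setIntegral_eq d1 ?_
    rintro ⟨g, hg⟩ x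
    obtain ⟨j, rfl⟩ := (hspan0 g).1 hg
    change f (toR2 j + x) = f x
    rw [add_comm, hf]
  rw [e1, ← ZSpan.map_fundamentalDomain]
  have hmp : MeasurePreserving M volume volume := by
    refine ⟨(LinearMap.continuous_of_finiteDimensional M.toLinearMap).measurable, ?_⟩
    have := Measure.map_linearMap_addHaar_eq_smul_addHaar (volume : Measure (ℝ × ℝ))
      (f := (M : (ℝ × ℝ) →ₗ[ℝ] (ℝ × ℝ))) (by rw [hM, Mmap_det]; norm_num)
    rw [hM, Mmap_det] at this
    simpa using this
  exact hmp.setIntegral_image_emb M.toContinuousLinearEquiv.toHomeomorph.measurableEmbedding f _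

theorem expI_int (n : ℤ) : expI (2 * π * n) = 1 := by
  unfold expI
  rw [Complex.exp_eq_one_iff]
  exact ⟨n, by push_cast; ring⟩

theorem torus_iter (g : ℝ × ℝ → ℂ) (hg : Continuous g) :
    torusInt g = ∫ t in (0:ℝ)..1, ∫ τ in (0:ℝ)..1, g (τ, t) := by
  unfold torusInt
  rw [← Set.Icc_prod_Icc, Measure.volume_eq_prod]
  rw [← setIntegral_prod_swap, setIntegral_prod]
  · rw [intervalIntegral.integral_of_le zero_le_one, ← integral_Icc_eq_integral_Ioc]
    congr 1; ext t
    rw [intervalIntegral.integral_of_le zero_le_one, ← integral_Icc_eq_integral_Ioc]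
    rfl
  · apply ContinuousOn.integrableOn_compact (isCompact_Icc.prod isCompact_Icc)
    exact (hg.comp continuous_swap).continuousOn

/-- the one-dimensional formula for the Fourier coefficient -/
theorem fcoef_formula (a : ℝ × ℝ → ℝ → ℂ) (ha_c : ∀ η, Continuous fun x => a x η)
    (ha_per : ∀ (x : ℝ × ℝ) (η : ℝ) (j : ℤ × ℤ), a (x + toR2 j) η = a x η)
    (w : ℤ × ℤ) (u v : ℤ) (h : (u:ℝ) * w.1 + v * w.2 = 1) (c : ℤ) (η : ℝ) :
    fcoef a (c • w) η = ∫ t in (0:ℝ)..1, ∫ τ in (0:ℝ)..1,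
      a (u * τ - w.2 * t, v * τ + w.1 * t) η * expI (-(2 * π * (c * τ))) := by
  unfold fcoef
  rw [torus_cov _ _ w.1 w.2 u v h]
  · rw [torus_iter]
    · congr 1; ext t; congr 1; ext τ
      simp only [Mmap, LinearEquiv.coe_mk, LinearMap.coe_mk, AddHom.coe_mk]
      congr 4
      simp [dot2, toR2]
      linear_combination (c * τ : ℝ) * h
    · simp only [Mmap, LinearEquiv.coe_mk, LinearMap.coe_mk, AddHom.coe_mk]
      refine ((ha_c η).comp (by fun_prop)).mul (continuous_expI.comp ?_)
      unfold dot2 toR2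
      fun_prop
  · intro x j
    rw [ha_per]
    congr 1
    have e : -(2 * π * dot2 (toR2 (c • w)) (x + toR2 j)) = -(2 * π * dot2 (toR2 (c • w)) x) +
        2 * π * ((-(c * (w.1 * j.1 + w.2 * j.2)) : ℤ) : ℝ) := by
      simp [dot2, toR2]; ring
    rw [e, expI_add, expI_int, mul_one]

theorem ibp1 (f f' : ℝ → ℂ) (hf : ∀ x, HasDerivAt f (f' x) x) (hf' : Continuous f')
    (h01 : f 1 = f 0) (c : ℤ) :
    ∫ τ in (0:ℝ)..1, f' τ * expI (-(2 * π * (c * τ))) =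
      (2 * π * c : ℝ) * Complex.I * ∫ τ in (0:ℝ)..1, f τ * expI (-(2 * π * (c * τ))) := by
  have hd : ∀ x : ℝ, HasDerivAt (fun τ : ℝ => expI (-(2 * π * (c * τ))))
      (-((2 * π * c : ℝ) * Complex.I) * expI (-(2 * π * (c * x)))) x := by
    intro x
    unfold expI
    have h1 : HasDerivAt (fun τ : ℝ => Complex.I * ((-(2 * π * (c * τ)) : ℝ) : ℂ))
        (Complex.I * ((-(2 * π * c) : ℝ) : ℂ)) x := by
      apply HasDerivAt.const_mul
      apply HasDerivAt.ofReal_comp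
      have := ((hasDerivAt_id x).const_mul (-(2 * π * c)))
      simp only [id, mul_one] at this
      refine this.congr_of_eventuallyEq (Eventually.of_forall fun y => ?_)
      simp; ring
    have := h1.cexp
    convert this using 1
    push_cast; ring
  have hcf : Continuous f := continuous_iff_continuousAt.2 fun x => (hf x).continuousAt
  have hce : Continuous (fun τ : ℝ => expI (-(2 * π * (c * τ)))) :=
    continuous_expI.comp (by fun_prop)
  have := intervalIntegral.integral_mul_deriv_eq_deriv_mul (a := 0) (b := 1)
    (u := fun τ : ℝ => expI (-(2 * π * (c * τ)))) (v := f) (fun x _ => hd x) (fun x _ => hf x)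
    ((continuous_const.mul hce).intervalIntegrable _ _) (hf'.intervalIntegrable _ _)
  have e1 : expI (-(2 * π * (c * 1))) = 1 := by
    have := expI_int (-c)
    rw [← this]; congr 1; push_cast; ring
  have e0 : expI (-(2 * π * (c * 0))) = 1 := by simp [expI]
  rw [e1, e0, h01] at this
  simp_rw [mul_comm (f' _)]
  rw [this, sub_self, zero_sub, ← intervalIntegral.integral_neg,
    ← intervalIntegral.integral_const_mul]
  congr 1; ext x; ring

theorem fourier_decay1 (f f' f'' : ℝ → ℂ) (hf : ∀ x, HasDerivAt f (f' x) x)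
    (hf' : ∀ x, HasDerivAt f' (f'' x) x) (hf'' : Continuous f'')
    (h01 : f 1 = f 0) (h01' : f' 1 = f' 0) (D : ℝ) (hD : ∀ x ∈ Set.Icc (0:ℝ) 1, ‖f'' x‖ ≤ D)
    (c : ℤ) (hc : c ≠ 0) :
    ‖∫ τ in (0:ℝ)..1, f τ * expI (-(2 * π * (c * τ)))‖ ≤ D * (1 / (c:ℝ) ^ 2) := by
  have hcf' : Continuous f' := continuous_iff_continuousAt.2 fun x => (hf' x).continuousAt
  have h1 := ibp1 f f' hf hcf' h01 c
  have h2 := ibp1 f' f'' hf' hf'' h01' c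
  rw [h1] at h2
  have h3 : ‖∫ τ in (0:ℝ)..1, f'' τ * expI (-(2 * π * (c * τ)))‖ ≤ D := by
    have := intervalIntegral.norm_integral_le_of_norm_le_const (a := 0) (b := 1) (C := D)
      (f := fun τ => f'' τ * expI (-(2 * π * (c * τ)))) ?_
    · simpa using this
    · intro x hx
      rw [norm_mul, norm_expI, mul_one]
      rw [Set.uIoc_of_le zero_le_one] at hx
      exact hD x ⟨hx.1.le, hx.2⟩
  rw [h2] at h3
  simp only [norm_mul, Complex.norm_I, Complex.norm_real, mul_one] at h3
  set N := ‖∫ τ in (0:ℝ)..1, f τ * expI (-(2 * π * (c * τ)))‖ with hN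
  have hN0 : 0 ≤ N := norm_nonneg _
  have hc' : (c:ℝ) ≠ 0 := by exact_mod_cast hc
  have hc2 : 0 < (c:ℝ) ^ 2 := by positivity
  rw [mul_one_div, le_div_iff₀ hc2]
  have h4 : ‖(2:ℝ)‖ * ‖π‖ * ‖(c:ℝ)‖ * (‖(2:ℝ)‖ * ‖π‖ * ‖(c:ℝ)‖ * N) = (2 * π) ^ 2 * (N * (c:ℝ)^2) := by
    rw [Real.norm_eq_abs, Real.norm_eq_abs, Real.norm_eq_abs, abs_of_pos Real.pi_pos,
      abs_of_pos (by norm_num : (0:ℝ) < 2), ← sq_abs (c:ℝ)]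
    ring
  rw [h4] at h3
  have h5 : (1:ℝ) ≤ (2 * π) ^ 2 := by nlinarith [Real.pi_gt_three]
  nlinarith [mul_nonneg hN0 hc2.le]

theorem fcoef_norm_le (a : ℝ × ℝ → ℝ → ℂ) (j : ℤ × ℤ) (η M : ℝ)
    (hM : ∀ x ∈ Set.Icc ((0, 0) : ℝ × ℝ) ((1, 1) : ℝ × ℝ), ‖a x η‖ ≤ M) :
    ‖fcoef a j η‖ ≤ M := by
  unfold fcoef torusInt
  have hvol : volume.real (Set.Icc ((0, 0) : ℝ × ℝ) ((1, 1) : ℝ × ℝ)) = 1 := by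
    rw [← Set.Icc_prod_Icc, Measure.real, Measure.volume_eq_prod, Measure.prod_prod]
    simp
  have := norm_setIntegral_le_of_norm_le_const (μ := volume) (C := M)
    (f := fun x => a x η * expI (-(2 * π * dot2 (toR2 j) x)))
    (s := Set.Icc ((0, 0) : ℝ × ℝ) ((1, 1) : ℝ × ℝ)) isCompact_Icc.measure_lt_top ?_
  · rwa [hvol, mul_one] at this
  · intro x hx
    rw [norm_mul, norm_expI, mul_one]
    exact hM x hx

theorem fcoef_decay (a : ℝ × ℝ → ℝ → ℂ)
    (ha_smooth : ContDiff ℝ (⊤ : ℕ∞) fun p : (ℝ × ℝ) × ℝ => a p.1 p.2)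
    (ha_per : ∀ (x : ℝ × ℝ) (η : ℝ) (j : ℤ × ℤ), a (x + toR2 j) η = a x η)
    (R : ℝ) (hR : ∀ (x : ℝ × ℝ) (η : ℝ), R ≤ |η| → a x η = 0)
    (w : ℤ × ℤ) (u v : ℤ) (h : (u:ℝ) * w.1 + v * w.2 = 1) :
    ∃ B : ℤ → ℝ, Summable B ∧ ∀ c η, ‖fcoef a (c • w) η‖ ≤ B c := by
  have ha_c : ∀ η, Continuous fun x => a x η := fun η =>
    ha_smooth.continuous.comp (f := fun x : ℝ × ℝ => (x, η)) (by fun_prop)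
  set a' : (ℝ × ℝ) × ℝ → ℂ := fun p => a p.1 p.2 with ha'
  set dir : (ℝ × ℝ) × ℝ := (((u:ℝ), (v:ℝ)), 0) with hdir
  set D1 : (ℝ × ℝ) × ℝ → ℂ := fun p => fderiv ℝ a' p dir with hD1
  have hD1s : ContDiff ℝ (⊤ : ℕ∞) D1 :=
    (ha_smooth.fderiv_right (m := (⊤ : ℕ∞)) (by simp)).clm_apply contDiff_const
  set D2 : (ℝ × ℝ) × ℝ → ℂ := fun p => fderiv ℝ D1 p dir with hD2
  have hD2s : ContDiff ℝ (⊤ : ℕ∞) D2 :=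
    (hD1s.fderiv_right (m := (⊤ : ℕ∞)) (by simp)).clm_apply contDiff_const
  set γ : ℝ → ℝ → ℝ → (ℝ × ℝ) × ℝ := fun t η τ => ((u * τ - w.2 * t, v * τ + w.1 * t), η) with hγ
  have hγd : ∀ t η τ, HasDerivAt (γ t η) dir τ := by
    intro t η τ
    have h1 : HasDerivAt (fun τ : ℝ => (u:ℝ) * τ - w.2 * t) u τ := by
      simpa using ((hasDerivAt_id τ).const_mul (u:ℝ)).sub_const (w.2 * t : ℝ)
    have h2 : HasDerivAt (fun τ : ℝ => (v:ℝ) * τ + w.1 * t) v τ := by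
      simpa using ((hasDerivAt_id τ).const_mul (v:ℝ)).add_const (w.1 * t : ℝ)
    exact (h1.prodMk h2).prodMk (hasDerivAt_const τ η)
  have hper0 : ∀ p, a' (p + dir) = a' p := by
    intro p
    have := ha_per p.1 p.2 (u, v)
    simpa [ha', hdir, toR2] using this
  have hper1 : ∀ p, D1 (p + dir) = D1 p := by
    intro p
    simp only [hD1]
    rw [← fderiv_comp_add_right]
    congr 2
    ext q
    exact hper0 q
  have hγ1 : ∀ t η, γ t η 1 = γ t η 0 + dir := by
    intro t η
    simp [hγ, hdir]; constructor <;> ring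
  obtain ⟨D, hD⟩ := (((isCompact_Icc (a := (0:ℝ)) (b := 1)).prod
    (isCompact_Icc (a := (0:ℝ)) (b := 1))).prod
    (isCompact_Icc (a := -R) (b := R))).exists_bound_of_continuousOn
    (f := fun z : (ℝ × ℝ) × ℝ => D2 (γ z.1.2 z.2 z.1.1))
    (hD2s.continuous.comp (by simp only [hγ]; fun_prop)).continuousOn
  obtain ⟨M, hM⟩ := ((isCompact_Icc (a := ((0, 0) : ℝ × ℝ)) (b := ((1, 1) : ℝ × ℝ))).prod
    (isCompact_Icc (a := -R) (b := R))).exists_bound_of_continuousOn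
    (f := a') ha_smooth.continuous.continuousOn
  refine ⟨fun c => (if c = 0 then |M| else 0) + |D| * (1 / (c:ℝ) ^ 2), ?_, ?_⟩
  · exact (hasSum_ite_eq (0:ℤ) |M|).summable.add
      ((Real.summable_one_div_int_pow.2 (by norm_num)).mul_left _)
  intro c η
  rcases le_or_gt R |η| with hη | hη
  · have h0 : ‖fcoef a (c • w) η‖ ≤ 0 := fcoef_norm_le _ _ _ _ fun x _ => by simp [hR x η hη]
    refine h0.trans ?_
    show (0:ℝ) ≤ (if c = 0 then |M| else 0) + |D| * (1 / (c:ℝ) ^ 2)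
    split_ifs <;> positivity
  have hη' := abs_le.1 hη.le
  by_cases hc : c = 0
  · have h0 : ‖fcoef a (c • w) η‖ ≤ |M| := fcoef_norm_le _ _ _ _ fun x hx =>
      (hM (x, η) ⟨hx, hη'⟩).trans (le_abs_self M)
    simpa [hc] using h0
  · simp only [hc, if_false, zero_add]
    rw [fcoef_formula a ha_c ha_per w u v h]
    have := intervalIntegral.norm_integral_le_of_norm_le_const (a := 0) (b := 1)
      (C := |D| * (1 / (c:ℝ) ^ 2))
      (f := fun t => ∫ τ in (0:ℝ)..1,
        a (u * τ - w.2 * t, v * τ + w.1 * t) η * expI (-(2 * π * (c * τ)))) ?_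
    · simpa using this
    intro t ht
    rw [Set.uIoc_of_le zero_le_one] at ht
    refine fourier_decay1 (fun τ => a' (γ t η τ)) (fun τ => D1 (γ t η τ)) (fun τ => D2 (γ t η τ))
      ?_ ?_ ?_ ?_ ?_ |D| ?_ c hc
    · intro τ
      exact ((ha_smooth.differentiable (by simp)) _).hasFDerivAt.comp_hasDerivAt τ (hγd t η τ)
    · intro τ
      exact ((hD1s.differentiable (by simp)) _).hasFDerivAt.comp_hasDerivAt τ (hγd t η τ)
    · exact hD2s.continuous.comp (by simp only [hγ]; fun_prop)
    · show a' (γ t η 1) = a' (γ t η 0)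
      rw [hγ1, hper0]
    · show D1 (γ t η 1) = D1 (γ t η 0)
      rw [hγ1, hper1]
    · intro τ hτ
      exact (hD ((τ, t), η) ⟨⟨hτ, ht.1.le, ht.2⟩, hη'⟩).trans (le_abs_self D)

theorem fcoef_lip (a : ℝ × ℝ → ℝ → ℂ)
    (ha_smooth : ContDiff ℝ (⊤ : ℕ∞) fun p : (ℝ × ℝ) × ℝ => a p.1 p.2)
    (R : ℝ) (hR : ∀ (x : ℝ × ℝ) (η : ℝ), R ≤ |η| → a x η = 0) :
    ∃ K : ℝ, 0 ≤ K ∧ ∀ j η, ‖fcoef a j η - fcoef a j 0‖ ≤ K * |η| := by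
  have ha_c : ∀ η, Continuous fun x => a x η := fun η =>
    ha_smooth.continuous.comp (f := fun x : ℝ × ℝ => (x, η)) (by fun_prop)
  set a' : (ℝ × ℝ) × ℝ → ℂ := fun p => a p.1 p.2 with ha'
  set R' := max R 1 with hR'
  obtain ⟨D, hD⟩ := ((isCompact_Icc (a := ((0, 0) : ℝ × ℝ)) (b := ((1, 1) : ℝ × ℝ))).prod
    (isCompact_Icc (a := -R') (b := R'))).exists_bound_of_continuousOn
    (f := fderiv ℝ a') (ha_smooth.continuous_fderiv (by simp)).continuousOn
  obtain ⟨M, hM⟩ := ((isCompact_Icc (a := ((0, 0) : ℝ × ℝ)) (b := ((1, 1) : ℝ × ℝ))).prod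
    (isCompact_Icc (a := -R') (b := R'))).exists_bound_of_continuousOn
    (f := a') ha_smooth.continuous.continuousOn
  have hconv : Convex ℝ (Set.Icc ((0, 0) : ℝ × ℝ) ((1, 1) : ℝ × ℝ) ×ˢ Set.Icc (-R') R') :=
    (convex_Icc _ _).prod (convex_Icc _ _)
  have h1R : 1 ≤ R' := le_max_right _ _
  have h0mem : (0:ℝ) ∈ Set.Icc (-R') R' := ⟨by linarith, by linarith⟩
  refine ⟨max |D| |M|, by positivity, ?_⟩
  intro j η
  have hsub : fcoef a j η - fcoef a j 0 = fcoef (fun x _ => a x η - a x 0) j 0 := by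
    unfold fcoef torusInt
    rw [← integral_sub]
    · congr 1; ext x; ring
    · refine (((ha_c η).mul (continuous_expI.comp ?_)).continuousOn).integrableOn_compact isCompact_Icc
      unfold dot2; fun_prop
    · refine (((ha_c 0).mul (continuous_expI.comp ?_)).continuousOn).integrableOn_compact isCompact_Icc
      unfold dot2; fun_prop
  rw [hsub]
  apply fcoef_norm_le
  intro x hx
  rcases le_or_gt |η| R' with hη | hη
  · have := hconv.norm_image_sub_le_of_norm_fderiv_le (f := a') (C := |D|)
      (x := (x, 0)) (y := (x, η))
      (fun p _ => (ha_smooth.differentiable (by simp)) p)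
      (fun p hp => (hD p hp).trans (le_abs_self D)) ⟨hx, h0mem⟩ ⟨hx, abs_le.1 hη⟩
    refine this.trans ?_
    have e : ‖((x, η) : (ℝ × ℝ) × ℝ) - (x, 0)‖ = |η| := by
      simp [Prod.norm_def]
    rw [e]
    gcongr
    exact le_max_left _ _
  · rw [hR x η ((le_max_left R 1).trans hη.le), zero_sub, norm_neg]
    have h1 := (hM (x, 0) ⟨hx, h0mem⟩).trans (le_abs_self M)
    have h2 : |M| ≤ max |D| |M| := le_max_right _ _
    have h3 : 0 ≤ |M| := abs_nonneg M
    have h4 : ‖a x 0‖ ≤ max |D| |M| := h1.trans h2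
    nlinarith

theorem fcoef_sum (a : ℝ × ℝ → ℝ → ℂ) (ha_c : ∀ η, Continuous fun x => a x η)
    (ha_per : ∀ (x : ℝ × ℝ) (η : ℝ) (j : ℤ × ℤ), a (x + toR2 j) η = a x η)
    (w : ℤ × ℤ) (u v : ℤ) (h : (u:ℝ) * w.1 + v * w.2 = 1) (x₀ : ℝ × ℝ) (η : ℝ)
    (hL : LL w ≠ 0) (hS : Summable fun c : ℤ => fcoef a (c • w) η) :
    ∑' c : ℤ, expI (2 * π * dot2 (toR2 (c • w)) x₀) * fcoef a (c • w) η = IΛ w a x₀ η := by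
  set P : ℝ → ℝ → ℝ × ℝ := fun τ t => (u * τ - w.2 * t, v * τ + w.1 * t) with hP
  set G : ℝ → ℂ := fun τ => ∫ t in (0:ℝ)..1, a (P τ t) η with hG
  have hcP : Continuous (Function.uncurry fun τ t => a (P τ t) η) :=
    (ha_c η).comp (by simp only [hP]; fun_prop)
  have hGc : Continuous G :=
    intervalIntegral.continuous_parametric_intervalIntegral_of_continuous' hcP 0 1
  have hGp : Function.Periodic G 1 := by
    intro τ
    simp only [hG]
    congr 1; ext t
    rw [← ha_per (P τ t) η (u, v)]
    congr 1
    simp [hP, toR2]; constructor <;> ring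
  let g : C(AddCircle (1:ℝ), ℂ) := ⟨hGp.lift, continuous_coinduced_dom.2 hGc⟩
  have hgG : ∀ x : ℝ, g (x : AddCircle (1:ℝ)) = G x := fun x => rfl
  have hcoef : ∀ c : ℤ, fourierCoeff g c = fcoef a (c • w) η := by
    intro c
    rw [fourierCoeff_eq_intervalIntegral g c 0, fcoef_formula a ha_c ha_per w u v h,
      intervalIntegral_intervalIntegral_swap]
    · simp only [div_one, one_smul, zero_add, hgG, hG, smul_eq_mul]
      congr 1; ext τ
      rw [fourier_expI, ← intervalIntegral.integral_const_mul]
      congr 1; ext t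
      rw [mul_comm]
      congr 2
      push_cast; ring
    · refine IntegrableOn.mono_set (t := Set.Icc 0 1 ×ˢ Set.Icc 0 1) ?_ ?_
      · apply ContinuousOn.integrableOn_compact (isCompact_Icc.prod isCompact_Icc)
        apply Continuous.continuousOn
        exact ((ha_c η).comp (by fun_prop)).mul (continuous_expI.comp (by fun_prop))
      · rw [Set.uIoc_of_le zero_le_one]
        exact Set.prod_mono Set.Ioc_subset_Icc_self Set.Ioc_subset_Icc_self
  have hsum : Summable (fourierCoeff g) := by
    rw [show fourierCoeff g = fun c : ℤ => fcoef a (c • w) η from funext hcoef]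
    exact hS
  have key := has_pointwise_sum_fourier_series_of_summable hsum
    ((w.1 * x₀.1 + w.2 * x₀.2 : ℝ) : AddCircle (1:ℝ))
  rw [hgG] at key
  have e1 : ∀ c : ℤ, fourierCoeff g c • (fourier c ((w.1 * x₀.1 + w.2 * x₀.2 : ℝ) : AddCircle (1:ℝ)) : ℂ)
      = expI (2 * π * dot2 (toR2 (c • w)) x₀) * fcoef a (c • w) η := by
    intro c
    rw [hcoef, fourier_expI, smul_eq_mul, mul_comm]
    congr 2
    simp [dot2, toR2]; ring
  simp_rw [e1] at key
  rw [key.tsum_eq]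
  unfold IΛ
  have e2 := intervalIntegral.integral_comp_div (a := 0) (b := LL w)
    (fun t => a (x₀ + t • toR2 (perpZ w)) η) hL
  rw [e2, zero_div, div_self hL, Complex.real_smul, inv_mul_cancel_left₀ (by exact_mod_cast hL)]
  set τ0 := (w.1 * x₀.1 + w.2 * x₀.2 : ℝ) with hτ0
  set κ := (-v * x₀.1 + u * x₀.2 : ℝ) with hκ
  have e3 : ∀ t : ℝ, x₀ + t • toR2 (perpZ w) = P τ0 (t + κ) := by
    intro t
    ext
    · simp [hP, toR2, perpZ, hτ0, hκ]; linear_combination -x₀.1 * h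
    · simp [hP, toR2, perpZ, hτ0, hκ]; linear_combination -x₀.2 * h
  simp_rw [e3]
  rw [intervalIntegral.integral_comp_add_right (fun t => a (P τ0 t) η) κ]
  have hp : Function.Periodic (fun t => a (P τ0 t) η) 1 := by
    intro t
    show a (P τ0 (t + 1)) η = a (P τ0 t) η
    rw [← ha_per (P τ0 t) η (perpZ w)]
    congr 1
    simp [hP, toR2, perpZ]; constructor <;> ring
  have := hp.intervalIntegral_add_eq 0 κ
  simp only [hG]
  rw [zero_add] at this ⊢
  rw [this, add_comm]

theorem dot2_shift (s c : ℝ) (m ξ z : ℝ × ℝ) :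
    dot2 (s • (m - c • ξ)) z = s * (dot2 m z - c * dot2 ξ z) := by
  simp [dot2]; ring

theorem LL_pos (w : ℤ × ℤ) (hw : Primitive w) : 0 < LL w := by
  unfold LL nrm2
  apply Real.sqrt_pos.2
  unfold dot2 toR2
  simp only
  have : w.1 ≠ 0 ∨ w.2 ≠ 0 := by
    by_contra hcon
    push Not at hcon
    unfold Primitive at hw
    rw [hcon.1, hcon.2] at hw
    simp at hw
  rcases this with h | h
  · have h1 : (w.1:ℝ) ≠ 0 := by exact_mod_cast h
    have := mul_self_pos.2 h1
    nlinarith [mul_self_nonneg (w.2:ℝ)]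
  · have h1 : (w.2:ℝ) ≠ 0 := by exact_mod_cast h
    have := mul_self_pos.2 h1
    nlinarith [mul_self_nonneg (w.1:ℝ)]

/-- coherent states, large perturbations `hb^{3/2} ≪ ε_hb ≪ hb`. -/
theorem stmt6
    (ε : ℝ → ℝ) (hεpos : ∀ hb ∈ Set.Ioc (0:ℝ) 1, 0 < ε hb)
    (hε32 : Tendsto (fun hb => ε hb / hb ^ ((3:ℝ)/2)) (𝓝[>] (0:ℝ)) atTop)
    (hε1 : Tendsto (fun hb => ε hb / hb) (𝓝[>] (0:ℝ)) (𝓝 0))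
    (φ : ℝ × ℝ → ℂ) (hφ_smooth : ContDiff ℝ (⊤ : ℕ∞) φ)
    (hφ_supp : ∀ x : ℝ × ℝ, φ x ≠ 0 → |x.1| < 1/2 ∧ |x.2| < 1/2)
    (hφ_norm : ∫ x : ℝ × ℝ, ‖φ x‖ ^ 2 = 1)
    (x₀ ξ₀ : ℝ × ℝ) (hξ₀ : ξ₀ ≠ 0)
    (a : ℝ × ℝ → ℝ → ℂ)
    (ha_smooth : ContDiff ℝ (⊤ : ℕ∞) fun p : (ℝ × ℝ) × ℝ => a p.1 p.2)
    (ha_per : ∀ (x : ℝ × ℝ) (η : ℝ) (j : ℤ × ℤ), a (x + toR2 j) η = a x η)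
    (ha_supp : ∃ R : ℝ, ∀ (x : ℝ × ℝ) (η : ℝ), R ≤ |η| → a x η = 0) :
    ∀ w : ℤ × ℤ, Primitive w →
      (dot2 ξ₀ (toR2 w) ≠ 0 →
        Tendsto (fun hb => Wcs φ x₀ ξ₀ w a hb (ε hb)) (𝓝[>] (0:ℝ)) (𝓝 0))
      ∧
      (dot2 ξ₀ (toR2 w) = 0 →
        Tendsto (fun hb => Wcs φ x₀ ξ₀ w a hb (ε hb)) (𝓝[>] (0:ℝ)) (𝓝 (IΛ w a x₀ 0))) := by
  intro w hw
  have hL : 0 < LL w := LL_pos w hw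
  have hbez : ((Int.gcdA w.1 w.2 : ℤ) : ℝ) * w.1 + ((Int.gcdB w.1 w.2 : ℤ) : ℝ) * w.2 = 1 := by
    have h1 := Int.gcd_eq_gcd_ab w.1 w.2
    unfold Primitive at hw
    rw [hw] at h1
    have h2 : ((1:ℤ):ℝ) = _ := congrArg (fun z : ℤ => (z:ℝ)) h1
    push_cast at h2
    linarith
  obtain ⟨R, hR⟩ := ha_supp
  have hs : boxS φ := fun x hx => ⟨(hφ_supp x hx).1.le, (hφ_supp x hx).2.le⟩
  obtain ⟨B, hBs, hB⟩ := fcoef_decay a ha_smooth ha_per R hR w _ _ hbez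
  have hB0 : ∀ c, 0 ≤ B c := fun c => (norm_nonneg _).trans (hB c 0)
  have hpos : ∀ᶠ hb in 𝓝[>] (0:ℝ), 0 < hb ∧ 0 < ε hb := by
    filter_upwards [Ioc_mem_nhdsGT (zero_lt_one' ℝ)] with hb hhb
    exact ⟨hhb.1, hεpos hb hhb⟩
  have hpi := Real.pi_pos
  constructor
  · intro hne
    set κ := |dot2 ξ₀ (toR2 w)| / 2 with hκ
    have hκ0 : 0 < κ := by have := abs_pos.2 hne; positivity
    have hsmall : ∀ᶠ hb in 𝓝[>] (0:ℝ), ε hb / hb < κ / (|R| * LL w + 1) :=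
      hε1.eventually_lt_const (by positivity)
    have hsq : Tendsto (fun hb : ℝ => Real.sqrt hb / κ) (𝓝[>] (0:ℝ)) (𝓝 0) := by
      have h1 : Tendsto (fun hb : ℝ => Real.sqrt hb / κ) (𝓝 (0:ℝ)) (𝓝 (Real.sqrt 0 / κ)) :=
        (Real.continuous_sqrt.div_const κ).tendsto 0
      rw [Real.sqrt_zero, zero_div] at h1
      exact h1.mono_left nhdsWithin_le_nhds
    have := W_limit φ hφ_smooth hs hφ_norm x₀ ξ₀ w a ε B hBs hB (fun _ => 0) B hB0
      (fun hb => Real.sqrt hb / κ) (Eventually.of_forall fun hb => by positivity) hsq ?_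
    · simpa using this
    filter_upwards [hpos, hsmall] with hb hb1 hb2
    obtain ⟨hb0, he0⟩ := hb1
    intro c m
    rw [sub_zero]
    rcases le_or_gt R |2 * π * hb ^ 2 / ε hb * HH w (toR2 m)| with hη | hη
    · have h0 : ‖fcoef a (c • w) (2 * π * hb ^ 2 / ε hb * HH w (toR2 m))‖ ≤ 0 :=
        fcoef_norm_le _ _ _ _ fun x _ => by simp [hR x _ hη]
      have := hB0 c
      exact h0.trans (by positivity)
    · refine (hB c _).trans ?_
      rw [mul_assoc]
      refine le_mul_of_one_le_right (hB0 c) ?_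
      rw [dot2_shift, abs_mul, abs_of_nonneg (Real.sqrt_nonneg hb)]
      set d := dot2 (toR2 m) (toR2 w) with hd
      have hη2 : hb * |d| ≤ κ := by
        have e1 : |2 * π * hb ^ 2 / ε hb * HH w (toR2 m)| = 2 * π * hb ^ 2 / ε hb * (|d| / LL w) := by
          unfold HH
          rw [abs_mul, abs_of_pos (by positivity : 0 < 2 * π * hb ^ 2 / ε hb), abs_div, abs_of_pos hL]
        rw [e1] at hη
        have hη3 : 2 * π * hb ^ 2 / ε hb * (|d| / LL w) < |R| := hη.trans_le (le_abs_self R)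
        have e2 : 2 * π * (hb * |d|) = (2 * π * hb ^ 2 / ε hb * (|d| / LL w)) * (LL w * (ε hb / hb)) := by
          field_simp
        have e3 : 2 * π * (hb * |d|) ≤ |R| * (LL w * (ε hb / hb)) := by
          rw [e2]
          gcongr
        have e4 : ε hb / hb * (|R| * LL w + 1) < κ := (lt_div_iff₀ (by positivity)).1 hb2
        have e5 : 0 < ε hb / hb := by positivity
        have e6 : 0 ≤ hb * |d| := by positivity
        nlinarith [Real.pi_gt_three]
      have h3 : κ ≤ hb * |d - hb⁻¹ * dot2 ξ₀ (toR2 w)| := by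
        have e7 : hb * |d - hb⁻¹ * dot2 ξ₀ (toR2 w)| = |dot2 ξ₀ (toR2 w) - hb * d| := by
          rw [← abs_of_pos hb0, ← abs_mul, abs_of_pos hb0, ← abs_neg]
          congr 1
          field_simp
          ring
        rw [e7]
        have e8 := abs_sub_abs_le_abs_sub (dot2 ξ₀ (toR2 w)) (hb * d)
        rw [abs_mul hb d, abs_of_pos hb0] at e8
        have e9 : |dot2 ξ₀ (toR2 w)| = 2 * κ := by rw [hκ]; ring
        linarith
      have e10 : Real.sqrt hb / κ * (Real.sqrt hb * |d - hb⁻¹ * dot2 ξ₀ (toR2 w)|)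
          = hb * |d - hb⁻¹ * dot2 ξ₀ (toR2 w)| / κ := by
        have e11 := Real.mul_self_sqrt hb0.le
        rw [div_mul_eq_mul_div, ← mul_assoc, e11]
      rw [e10]
      exact (one_le_div hκ0).2 h3
  · intro hz
    obtain ⟨K, hK0, hK⟩ := fcoef_lip a ha_smooth R hR
    have hsum := fcoef_sum a
      (fun η => ha_smooth.continuous.comp (f := fun x : ℝ × ℝ => (x, η)) (by fun_prop))
      ha_per w _ _ hbez x₀ 0 hL.ne' (Summable.of_norm_bounded hBs fun c => hB c 0)
    rw [← hsum]
    have hlim : Tendsto (fun hb : ℝ => 2 * π / LL w * (ε hb / hb ^ ((3:ℝ)/2))⁻¹) (𝓝[>] (0:ℝ)) (𝓝 0) := by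
      simpa using hε32.inv_tendsto_atTop.const_mul (2 * π / LL w)
    refine W_limit φ hφ_smooth hs hφ_norm x₀ ξ₀ w a ε B hBs hB (fun c => fcoef a (c • w) 0)
      (fun _ => K) (fun _ => hK0) _ ?_ hlim ?_
    · filter_upwards [hpos] with hb hb1
      have := hb1.1
      have := hb1.2
      positivity
    · filter_upwards [hpos] with hb hb1
      obtain ⟨hb0, he0⟩ := hb1
      intro c m
      refine (hK _ _).trans (le_of_eq ?_)
      rw [mul_assoc K]
      congr 1
      rw [dot2_shift, hz, mul_zero, sub_zero, abs_mul, abs_mul, abs_of_nonneg (Real.sqrt_nonneg hb),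
        abs_of_pos (by positivity : 0 < 2 * π * hb ^ 2 / ε hb)]
      unfold HH
      rw [abs_div, abs_of_pos hL]
      have e : hb ^ 2 = hb ^ ((3:ℝ)/2) * Real.sqrt hb := by
        rw [Real.sqrt_eq_rpow, ← Real.rpow_add hb0, ← Real.rpow_natCast]
        norm_num
      rw [e]
      field_simp
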